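/- arXiv:2011.05033 — 2 statements merged into one kernel-verified Lean document; each statement's English description precedes it below -/
import Mathlib

section
/- Under Assumption 1 and the |H| = 1 hypothesis, suppose there is no (μ, x, w) ∈ ℝ^m × ℝ^n × ℝ with: μ ≥ 0; d* + Σ_{i∈M} ξ_i μ_i = 0; c_1 + Σ_{i∈M} a_{i1} μ_i = 0; (D_{jj} − d*) x_j + c_j + Σ_{i∈M} a_{ij} μ_i = 0 for every j ∈ N, j ≠ 1; ξ_i w + 2 Σ_{j∈N} a_{ij} x_j ≤ b_i for every i ∈ M; and Σ_{j∈N} x_j² ≤ w. Then the second convex relaxation (C') is exact, i.e., q* = c*, and hence the Shor relaxation is exact. -/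
/-!
The values always satisfy `q* ≤ v* ≤ c*` (`conv1Val_le_shorVal`, `shorVal_le_qVal`), so
everything follows from `c* ≤ q*`.

Some nonnegative combination of the `Aⁱ` is positive definite, hence the same combination of the
`ξᵢ` is positive; aggregating the constraints accordingly bounds `w`, and then `x` through
`∑ xⱼ² ≤ w`. The feasible set of (C') is therefore compact and (C') has a minimizer `(x, w)`
(`exists_minimizer`). There are two cases.

* If `∑ xⱼ² = w`, then `x` is feasible for (P) with objective value `q*`, so `c* ≤ q*`.
* If `∑ xⱼ² < w`, then near `(x, w)` the problem (C') has only linear constraints. No direction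
  that is feasible for the active constraints decreases the objective to first order, so Farkas'
  lemma (`farkas`) gives multipliers `μ ≥ 0` with vanishing gradient of the Lagrangian
  (`exists_multipliers`). The triple `(μ, x, w)` then lies in the set assumed to be empty.
-/

/- Common definitions for diagonal QCQPs, the Shor relaxation, and the
convex relaxations, following "Exactness conditions for the Shor relaxation
of diagonal QCQPs". Optimal values are infima in the extended reals. -/

namespace DiagQCQP2011

open Matrix Finset

noncomputable section

/-- Trace inner product `Y • X` of two square matrices. -/
def traceIP {n : ℕ} (Y X : Matrix (Fin n) (Fin n) ℝ) : ℝ :=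
  ∑ j, ∑ k, Y j k * X j k

/-- Objective of the QCQP (P): `xᵀ D x + 2 cᵀ x`. -/
def qObj {n : ℕ} (D : Matrix (Fin n) (Fin n) ℝ) (c : Fin n → ℝ) (x : Fin n → ℝ) : ℝ :=
  (∑ j, ∑ k, x j * D j k * x k) + 2 * ∑ j, c j * x j

/-- Feasibility for the QCQP (P): `xᵀ Aⁱ x + 2 aᵢᵀ x ≤ bᵢ` for all `i`. -/
def qFeas {n m : ℕ} (A : Fin m → Matrix (Fin n) (Fin n) ℝ) (a : Fin m → Fin n → ℝ)
    (b : Fin m → ℝ) (x : Fin n → ℝ) : Prop :=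
  ∀ i, (∑ j, ∑ k, x j * A i j k * x k) + 2 * ∑ j, a i j * x j ≤ b i

/-- Optimal value `c*` of the QCQP (P), as an infimum in the extended reals. -/
def qVal {n m : ℕ} (D : Matrix (Fin n) (Fin n) ℝ) (A : Fin m → Matrix (Fin n) (Fin n) ℝ)
    (c : Fin n → ℝ) (a : Fin m → Fin n → ℝ) (b : Fin m → ℝ) : EReal :=
  sInf {v : EReal | ∃ x : Fin n → ℝ, qFeas A a b x ∧ v = ((qObj D c x : ℝ) : EReal)}

/-- Objective of the Shor relaxation (S): `D • X + 2 cᵀ x`. -/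
def shorObj {n : ℕ} (D : Matrix (Fin n) (Fin n) ℝ) (c : Fin n → ℝ)
    (X : Matrix (Fin n) (Fin n) ℝ) (x : Fin n → ℝ) : ℝ :=
  traceIP D X + 2 * ∑ j, c j * x j

/-- Feasibility for the Shor relaxation (S). -/
def shorFeas {n m : ℕ} (A : Fin m → Matrix (Fin n) (Fin n) ℝ) (a : Fin m → Fin n → ℝ)
    (b : Fin m → ℝ) (X : Matrix (Fin n) (Fin n) ℝ) (x : Fin n → ℝ) : Prop :=
  X.IsSymm ∧ (∀ i, traceIP (A i) X + 2 * ∑ j, a i j * x j ≤ b i) ∧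
    (X - vecMulVec x x).PosSemidef

/-- Optimal value `v*` of the Shor relaxation (S). -/
def shorVal {n m : ℕ} (D : Matrix (Fin n) (Fin n) ℝ) (A : Fin m → Matrix (Fin n) (Fin n) ℝ)
    (c : Fin n → ℝ) (a : Fin m → Fin n → ℝ) (b : Fin m → ℝ) : EReal :=
  sInf {v : EReal | ∃ (X : Matrix (Fin n) (Fin n) ℝ) (x : Fin n → ℝ),
    shorFeas A a b X x ∧ v = ((shorObj D c X x : ℝ) : EReal)}

/-- Strict feasibility (interior point) for the Shor relaxation (S). -/
def shorStrictFeas {n m : ℕ} (A : Fin m → Matrix (Fin n) (Fin n) ℝ) (a : Fin m → Fin n → ℝ)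
    (b : Fin m → ℝ) (X : Matrix (Fin n) (Fin n) ℝ) (x : Fin n → ℝ) : Prop :=
  X.IsSymm ∧ (∀ i, traceIP (A i) X + 2 * ∑ j, a i j * x j < b i) ∧
    (X - vecMulVec x x).PosDef

/-- Assumption 1: (P) is feasible, some nonnegative combination of the `Aⁱ` is
positive definite, and (S) has a strictly feasible (interior) point. -/
def Assumption1 {n m : ℕ} (A : Fin m → Matrix (Fin n) (Fin n) ℝ) (a : Fin m → Fin n → ℝ)
    (b : Fin m → ℝ) : Prop :=
  (∃ x : Fin n → ℝ, qFeas A a b x) ∧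
  (∃ y : Fin m → ℝ, (∀ i, 0 ≤ y i) ∧ (∑ i, y i • A i).PosDef) ∧
  (∃ (X : Matrix (Fin n) (Fin n) ℝ) (x : Fin n → ℝ), shorStrictFeas A a b X x)

/-- Objective of the convex relaxation (C). -/
def convObj {n : ℕ} (D : Matrix (Fin n) (Fin n) ℝ) (c : Fin n → ℝ)
    (x z : Fin n → ℝ) : ℝ :=
  (∑ j, D j j * z j) + 2 * ∑ j, c j * x j

/-- Feasibility for the convex relaxation (C). -/
def convFeas {n m : ℕ} (A : Fin m → Matrix (Fin n) (Fin n) ℝ) (a : Fin m → Fin n → ℝ)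
    (b : Fin m → ℝ) (x z : Fin n → ℝ) : Prop :=
  (∀ i, (∑ j, A i j j * z j) + 2 * ∑ j, a i j * x j ≤ b i) ∧ ∀ j, x j ^ 2 ≤ z j

/-- Optimal value `p*` of the convex relaxation (C). -/
def convVal {n m : ℕ} (D : Matrix (Fin n) (Fin n) ℝ) (A : Fin m → Matrix (Fin n) (Fin n) ℝ)
    (c : Fin n → ℝ) (a : Fin m → Fin n → ℝ) (b : Fin m → ℝ) : EReal :=
  sInf {v : EReal | ∃ x z : Fin n → ℝ,
    convFeas A a b x z ∧ v = ((convObj D c x z : ℝ) : EReal)}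

/-- KKT point of the convex relaxation (C). -/
def KKT {n m : ℕ} (D : Matrix (Fin n) (Fin n) ℝ) (A : Fin m → Matrix (Fin n) (Fin n) ℝ)
    (c : Fin n → ℝ) (a : Fin m → Fin n → ℝ) (b : Fin m → ℝ)
    (x z : Fin n → ℝ) (μ : Fin m → ℝ) (ν : Fin n → ℝ) : Prop :=
  (∀ i, 0 ≤ μ i) ∧ (∀ j, 0 ≤ ν j) ∧
  (∀ j, D j j + (∑ i, μ i * A i j j) - ν j = 0) ∧
  (∀ j, c j + (∑ i, μ i * a i j) + ν j * x j = 0) ∧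
  convFeas A a b x z ∧
  (∀ i, μ i * (b i - (∑ j, A i j j * z j) - 2 * ∑ j, a i j * x j) = 0) ∧
  (∀ j, ν j * (z j - x j ^ 2) = 0)

/-- The polyhedral set `S_k` of multipliers, whose emptiness (for all `k`)
is the exactness condition of Burer–Ye. -/
def Sk {n m : ℕ} (D : Matrix (Fin n) (Fin n) ℝ) (A : Fin m → Matrix (Fin n) (Fin n) ℝ)
    (c : Fin n → ℝ) (a : Fin m → Fin n → ℝ) (k : Fin n) : Set (Fin m → ℝ) :=
  {μ | (∀ i, 0 ≤ μ i) ∧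
       D k k + (∑ i, μ i * A i k k) = 0 ∧
       c k + (∑ i, μ i * a i k) = 0 ∧
       ∀ j, j ≠ k → 0 ≤ D j j + (∑ i, μ i * A i j j)}

/-- Partition hypothesis: `{N_h}` partitions `N`, within each class all
constraint matrices have a common diagonal value `ξ^{ih}`, and in each class the
minimal diagonal entry of `D` is attained at the unique index `j_h`. -/
def PartitionHyp {n m : ℕ} {H : Type*} (D : Matrix (Fin n) (Fin n) ℝ)
    (A : Fin m → Matrix (Fin n) (Fin n) ℝ) (Nh : H → Finset (Fin n))
    (ξ : Fin m → H → ℝ) (jh : H → Fin n) : Prop :=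
  (∀ j : Fin n, ∃! h : H, j ∈ Nh h) ∧
  (∀ i h, ∀ j ∈ Nh h, A i j j = ξ i h) ∧
  (∀ h, jh h ∈ Nh h) ∧
  (∀ h, ∀ j ∈ Nh h, j ≠ jh h → D (jh h) (jh h) < D j j)

/-- Objective of the second convex relaxation (C'). -/
def conv2Obj {n : ℕ} {H : Type*} [Fintype H] (D : Matrix (Fin n) (Fin n) ℝ)
    (c : Fin n → ℝ) (Nh : H → Finset (Fin n)) (jh : H → Fin n)
    (x : Fin n → ℝ) (w : H → ℝ) : ℝ :=
  (∑ h, D (jh h) (jh h) * w h) +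
    (∑ h, ∑ j ∈ Nh h, (D j j - D (jh h) (jh h)) * x j ^ 2) + 2 * ∑ j, c j * x j

/-- Feasibility for the second convex relaxation (C'). -/
def conv2Feas {n m : ℕ} {H : Type*} [Fintype H] (ξ : Fin m → H → ℝ)
    (a : Fin m → Fin n → ℝ) (b : Fin m → ℝ) (Nh : H → Finset (Fin n))
    (x : Fin n → ℝ) (w : H → ℝ) : Prop :=
  (∀ i, (∑ h, ξ i h * w h) + 2 * ∑ j, a i j * x j ≤ b i) ∧
  ∀ h, (∑ j ∈ Nh h, x j ^ 2) ≤ w h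

/-- Optimal value `q*` of the second convex relaxation (C'). -/
def conv2Val {n m : ℕ} {H : Type*} [Fintype H] (D : Matrix (Fin n) (Fin n) ℝ)
    (ξ : Fin m → H → ℝ) (c : Fin n → ℝ) (a : Fin m → Fin n → ℝ) (b : Fin m → ℝ)
    (Nh : H → Finset (Fin n)) (jh : H → Fin n) : EReal :=
  sInf {v : EReal | ∃ (x : Fin n → ℝ) (w : H → ℝ),
    conv2Feas ξ a b Nh x w ∧ v = ((conv2Obj D c Nh jh x w : ℝ) : EReal)}

/-- KKT point of the second convex relaxation (C'). -/
def KKT2 {n m : ℕ} {H : Type*} [Fintype H] (D : Matrix (Fin n) (Fin n) ℝ)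
    (ξ : Fin m → H → ℝ) (c : Fin n → ℝ) (a : Fin m → Fin n → ℝ) (b : Fin m → ℝ)
    (Nh : H → Finset (Fin n)) (jh : H → Fin n)
    (x : Fin n → ℝ) (w : H → ℝ) (μ : Fin m → ℝ) (γ : H → ℝ) : Prop :=
  (∀ i, 0 ≤ μ i) ∧ (∀ h, 0 ≤ γ h) ∧
  (∀ h, D (jh h) (jh h) + (∑ i, μ i * ξ i h) - γ h = 0) ∧
  (∀ h, ∀ j ∈ Nh h,
    (D j j - D (jh h) (jh h)) * x j + c j + (∑ i, μ i * a i j) + γ h * x j = 0) ∧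
  conv2Feas ξ a b Nh x w ∧
  (∀ i, μ i * (b i - (∑ h, ξ i h * w h) - 2 * ∑ j, a i j * x j) = 0) ∧
  (∀ h, γ h * (w h - ∑ j ∈ Nh h, x j ^ 2) = 0)

/-- Objective of the second convex relaxation (C') in the case `|H| = 1`
(with `j_1 = 0` scaled out; `d* = D 0 0`). -/
def conv1Obj {n : ℕ} [NeZero n] (D : Matrix (Fin n) (Fin n) ℝ) (c : Fin n → ℝ)
    (x : Fin n → ℝ) (w : ℝ) : ℝ :=
  D 0 0 * w + (∑ j, (D j j - D 0 0) * x j ^ 2) + 2 * ∑ j, c j * x j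

/-- Feasibility for the second convex relaxation (C') in the case `|H| = 1`. -/
def conv1Feas {n m : ℕ} (ξ : Fin m → ℝ) (a : Fin m → Fin n → ℝ) (b : Fin m → ℝ)
    (x : Fin n → ℝ) (w : ℝ) : Prop :=
  (∀ i, ξ i * w + 2 * ∑ j, a i j * x j ≤ b i) ∧ (∑ j, x j ^ 2) ≤ w

/-- Optimal value `q*` of the second convex relaxation (C') in the case `|H| = 1`. -/
def conv1Val {n m : ℕ} [NeZero n] (D : Matrix (Fin n) (Fin n) ℝ) (ξ : Fin m → ℝ)
    (c : Fin n → ℝ) (a : Fin m → Fin n → ℝ) (b : Fin m → ℝ) : EReal :=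
  sInf {v : EReal | ∃ (x : Fin n → ℝ) (w : ℝ),
    conv1Feas ξ a b x w ∧ v = ((conv1Obj D c x w : ℝ) : EReal)}

/-- The function `x_j(μ)` from the paper (meaningful for `j ≠ 0`, `|H| = 1`). -/
def xmu {n m : ℕ} [NeZero n] (D : Matrix (Fin n) (Fin n) ℝ) (c : Fin n → ℝ)
    (a : Fin m → Fin n → ℝ) (μ : Fin m → ℝ) (j : Fin n) : ℝ :=
  -(c j + ∑ i, μ i * a i j) / (D j j - D 0 0)

end


/-! ### Farkas' lemma -/

/-- Homogeneous **Farkas lemma** for finitely many linear functionals on a real vector space of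
any dimension. The proof is Bartl's algebraic induction on the number of functionals: if some `v₀`
violates the implication for the first functionals only, every functional is corrected by a
multiple of the last one so as to vanish at `v₀`. -/
lemma farkas {V ι : Type*} [AddCommGroup V] [Module ℝ V] (s : Finset ι) :
    ∀ (φ : ι → V →ₗ[ℝ] ℝ) (ψ : V →ₗ[ℝ] ℝ),
      (∀ v, (∀ i ∈ s, φ i v ≤ 0) → ψ v ≤ 0) →
      ∃ l : ι → ℝ, (∀ i ∈ s, 0 ≤ l i) ∧ ∀ v, ψ v = ∑ i ∈ s, l i * φ i v := by
  classical
  induction s using Finset.induction_on with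
  | empty =>
    intro φ ψ h
    refine ⟨fun _ => 0, by simp, fun v => ?_⟩
    have h1 := h v (by simp)
    have h2 := h (-v) (by simp)
    rw [map_neg] at h2
    simp only [Finset.sum_empty]
    linarith
  | insert k s hk ih =>
    intro φ ψ h
    by_cases hs : ∀ v, (∀ i ∈ s, φ i v ≤ 0) → ψ v ≤ 0
    · obtain ⟨l, hl, hψ⟩ := ih φ ψ hs
      refine ⟨fun i => if i = k then 0 else l i, ?_, fun v => ?_⟩
      · intro i hi
        by_cases hik : i = k
        · simp [hik]
        · simpa [hik] using hl i (Finset.mem_of_mem_insert_of_ne hi hik)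
      · rw [Finset.sum_insert hk, hψ v]
        simp only [if_true, zero_mul, zero_add]
        refine Finset.sum_congr rfl fun i hi => ?_
        rw [if_neg (ne_of_mem_of_not_mem hi hk)]
    · push Not at hs
      obtain ⟨v₀, hv₀, hψ₀⟩ := hs
      have hpos : 0 < φ k v₀ := by
        by_contra hcon
        refine absurd (h v₀ fun i hi => ?_) (not_le.mpr hψ₀)
        rcases Finset.mem_insert.mp hi with rfl | hi
        · exact not_lt.mp hcon
        · exact hv₀ i hi
      have hne : φ k v₀ ≠ 0 := hpos.ne'
      -- Each corrected functional is the original one composed with the projection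
      -- `v ↦ v - (φ k v / φ k v₀) • v₀` onto the kernel of `φ k`.
      obtain ⟨l, hl, hψ⟩ := ih (fun i => φ i - (φ i v₀ / φ k v₀) • φ k)
        (ψ - (ψ v₀ / φ k v₀) • φ k) (by
          intro v hv
          have key := h (v - (φ k v / φ k v₀) • v₀) (by
            intro i hi
            rcases Finset.mem_insert.mp hi with rfl | hi
            · simp only [map_sub, map_smul, smul_eq_mul]
              rw [div_mul_cancel₀ _ hne, sub_self]
            · have := hv i hi
              simp only [LinearMap.sub_apply, LinearMap.smul_apply, smul_eq_mul] at this
              simp only [map_sub, map_smul, smul_eq_mul]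
              convert this using 2
              ring)
          simp only [map_sub, map_smul, smul_eq_mul] at key
          simp only [LinearMap.sub_apply, LinearMap.smul_apply, smul_eq_mul]
          convert key using 2
          ring)
      refine ⟨fun i => if i = k then (ψ v₀ - ∑ i ∈ s, l i * φ i v₀) / φ k v₀ else l i, ?_,
        fun v => ?_⟩
      · intro i hi
        by_cases hik : i = k
        · have : ∑ i ∈ s, l i * φ i v₀ ≤ 0 :=
            Finset.sum_nonpos fun i hi => mul_nonpos_of_nonneg_of_nonpos (hl i hi) (hv₀ i hi)
          simp only [hik, if_true]
          exact div_nonneg (by linarith) hpos.le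
        · simpa [hik] using hl i (Finset.mem_of_mem_insert_of_ne hi hik)
      · have e := hψ v
        simp only [LinearMap.sub_apply, LinearMap.smul_apply, smul_eq_mul] at e
        have e1 : ∑ i ∈ s, (if i = k then (ψ v₀ - ∑ i ∈ s, l i * φ i v₀) / φ k v₀ else l i)
            * φ i v = ∑ i ∈ s, l i * φ i v :=
          Finset.sum_congr rfl fun i hi => by rw [if_neg (ne_of_mem_of_not_mem hi hk)]
        have e2 : ∑ i ∈ s, l i * (φ i v - φ i v₀ / φ k v₀ * φ k v)
            = ∑ i ∈ s, l i * φ i v - (∑ i ∈ s, l i * φ i v₀) / φ k v₀ * φ k v := by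
          rw [Finset.sum_div, Finset.sum_mul, ← Finset.sum_sub_distrib]
          exact Finset.sum_congr rfl fun i _ => by ring
        rw [Finset.sum_insert hk, e1]
        simp only [if_true]
        rw [e2] at e
        linear_combination e

/-! ### The relaxation (C') with a single class -/

/-- The linear functional `(x, w) ↦ τ w + 2 αᵀ x`. -/
def linFun {n : ℕ} (α : Fin n → ℝ) (τ : ℝ) : ((Fin n → ℝ) × ℝ) →ₗ[ℝ] ℝ where
  toFun p := τ * p.2 + 2 * ∑ j, α j * p.1 j
  map_add' p q := by
    simp only [Prod.snd_add, Prod.fst_add, Pi.add_apply, mul_add, Finset.sum_add_distrib]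
    ring
  map_smul' r p := by
    simp only [Prod.smul_snd, Prod.smul_fst, Pi.smul_apply, smul_eq_mul, RingHom.id_apply, mul_add,
      Finset.mul_sum]
    congr 1
    · ring
    · exact Finset.sum_congr rfl fun j _ => by ring

lemma linFun_apply {n : ℕ} (α : Fin n → ℝ) (τ : ℝ) (p : (Fin n → ℝ) × ℝ) :
    linFun α τ p = τ * p.2 + 2 * ∑ j, α j * p.1 j := rfl

/-- The second-order expansion of the objective of (C') along a ray; it is exact because the
objective is quadratic. -/
lemma conv1Obj_ray {n : ℕ} [NeZero n] (D : Matrix (Fin n) (Fin n) ℝ) (c x u : Fin n → ℝ)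
    (w t ε : ℝ) :
    conv1Obj D c (x + ε • u) (w + ε * t) = conv1Obj D c x w +
      ε * (linFun (fun j => c j + (D j j - D 0 0) * x j) (D 0 0) (u, t)
        + ε * ∑ j, (D j j - D 0 0) * u j ^ 2) := by
  have e : ∑ j, (D j j - D 0 0) * (x j + ε * u j) ^ 2 + 2 * ∑ j, c j * (x j + ε * u j)
      = ∑ j, (D j j - D 0 0) * x j ^ 2 + 2 * ∑ j, c j * x j
        + ε * (2 * ∑ j, (c j + (D j j - D 0 0) * x j) * u j)
        + ε * (ε * ∑ j, (D j j - D 0 0) * u j ^ 2) := by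
    simp only [Finset.mul_sum, ← Finset.sum_add_distrib]
    exact Finset.sum_congr rfl fun j _ => by ring
  simp only [conv1Obj, linFun_apply, Pi.add_apply, Pi.smul_apply, smul_eq_mul]
  linear_combination e

/-- First-order conditions at a minimizer of (C') where the cone constraint `∑ xⱼ² ≤ w` is
slack. Near such a point only linear constraints are present, so multipliers exist without any
constraint qualification. -/
lemma exists_multipliers {n m : ℕ} [NeZero n] (D : Matrix (Fin n) (Fin n) ℝ)
    (c : Fin n → ℝ) (a : Fin m → Fin n → ℝ) (b ξ : Fin m → ℝ) (x : Fin n → ℝ) (w : ℝ)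
    (hf : conv1Feas ξ a b x w) (hslack : ∑ j, x j ^ 2 < w)
    (hopt : ∀ y v, conv1Feas ξ a b y v → conv1Obj D c x w ≤ conv1Obj D c y v) :
    ∃ μ : Fin m → ℝ, (∀ i, 0 ≤ μ i) ∧ D 0 0 + (∑ i, ξ i * μ i) = 0 ∧
      ∀ j, (D j j - D 0 0) * x j + c j + (∑ i, a i j * μ i) = 0 := by
  classical
  set g := linFun (fun j => c j + (D j j - D 0 0) * x j) (D 0 0) with hg
  set s : Finset (Fin m) := Finset.univ.filter fun i => ξ i * w + 2 * ∑ j, a i j * x j = b i with hs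
  have hdir : ∀ v, (∀ i ∈ s, linFun (a i) (ξ i) v ≤ 0) → (-g) v ≤ 0 := by
    rintro ⟨u, t⟩ hv
    by_contra hneg
    have hgneg : g (u, t) < 0 := by
      simpa using hneg
    have hobj : ∀ᶠ ε : ℝ in nhdsWithin 0 (Set.Ioi 0), g (u, t) + ε * ∑ j, (D j j - D 0 0) * u j ^ 2 < 0 := by
      apply Filter.Eventually.filter_mono nhdsWithin_le_nhds
      have hc : Continuous fun ε : ℝ => g (u, t) + ε * ∑ j, (D j j - D 0 0) * u j ^ 2 := by
        fun_prop
      exact hc.continuousAt.eventually_lt continuousAt_const (by simpa using hgneg)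
    have hcone : ∀ᶠ ε : ℝ in nhdsWithin 0 (Set.Ioi 0), ∑ j, (x j + ε * u j) ^ 2 < w + ε * t := by
      apply Filter.Eventually.filter_mono nhdsWithin_le_nhds
      have hc₁ : Continuous fun ε : ℝ => ∑ j, (x j + ε * u j) ^ 2 := by fun_prop
      have hc₂ : Continuous fun ε : ℝ => w + ε * t := by fun_prop
      exact hc₁.continuousAt.eventually_lt hc₂.continuousAt (by simpa using hslack)
    have hexp : ∀ i (ε : ℝ), ξ i * (w + ε * t) + 2 * ∑ j, a i j * (x j + ε * u j)
        = (ξ i * w + 2 * ∑ j, a i j * x j) + ε * linFun (a i) (ξ i) (u, t) := by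
      intro i ε
      have := (linFun (a i) (ξ i)).map_add (x, w) (ε • (u, t))
      rw [map_smul] at this
      simpa [linFun_apply] using this
    have hlin : ∀ᶠ ε : ℝ in nhdsWithin 0 (Set.Ioi 0), ∀ i,
        ξ i * (w + ε * t) + 2 * ∑ j, a i j * (x j + ε * u j) ≤ b i := by
      rw [Filter.eventually_all]
      intro i
      by_cases hi : i ∈ s
      · filter_upwards [self_mem_nhdsWithin] with ε hε
        rw [hexp, (Finset.mem_filter.mp hi).2]
        have := mul_nonpos_of_nonneg_of_nonpos (le_of_lt hε) (hv i hi)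
        linarith
      · have hlt : ξ i * w + 2 * ∑ j, a i j * x j < b i :=
          lt_of_le_of_ne (hf.1 i) fun e => hi (by simp [hs, e])
        apply Filter.Eventually.filter_mono nhdsWithin_le_nhds
        simp only [hexp]
        have hc : Continuous fun ε : ℝ =>
            (ξ i * w + 2 * ∑ j, a i j * x j) + ε * linFun (a i) (ξ i) (u, t) := by fun_prop
        exact (hc.continuousAt.eventually_lt continuousAt_const (by simpa using hlt)).mono
          fun _ h => h.le
    obtain ⟨ε, ⟨⟨h1, h2⟩, h3⟩, h4⟩ :=
      (((hobj.and hcone).and hlin).and self_mem_nhdsWithin).exists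
    have := hopt (x + ε • u) (w + ε * t) ⟨fun i => by simpa using h3 i, by simpa using h2.le⟩
    rw [conv1Obj_ray] at this
    have := mul_neg_of_pos_of_neg (Set.mem_Ioi.mp h4) h1
    linarith
  obtain ⟨l, hl, hgl⟩ := farkas s (fun i => linFun (a i) (ξ i)) (-g) hdir
  have hsum : ∀ f : Fin m → ℝ, ∑ i, f i * (if i ∈ s then l i else 0) = ∑ i ∈ s, l i * f i := by
    intro f
    simp [Finset.sum_ite_mem, mul_comm]
  refine ⟨fun i => if i ∈ s then l i else 0, ?_, ?_, ?_⟩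
  · intro i
    by_cases hi : i ∈ s
    · simpa [hi] using hl i hi
    · simp [hi]
  · have := hgl (0, 1)
    simp only [hg, LinearMap.neg_apply, linFun_apply, Pi.zero_apply, mul_zero,
      Finset.sum_const_zero, add_zero, mul_one] at this
    rw [hsum]
    linarith
  · intro j
    have := hgl (Pi.single j 1, 0)
    simp only [hg, LinearMap.neg_apply, linFun_apply, Pi.single_apply, mul_ite, mul_one, mul_zero,
      Finset.sum_ite_eq', Finset.mem_univ, if_true, zero_add] at this
    have e : ∑ i ∈ s, l i * (2 * a i j) = 2 * ∑ i ∈ s, l i * a i j := by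
      rw [Finset.mul_sum]
      exact Finset.sum_congr rfl fun i _ => by ring
    rw [e] at this
    rw [hsum (fun i => a i j)]
    linarith

/-- A nonnegative aggregation of the linear constraints with positive weight on `w` makes the
feasible set of (C') compact, so the infimum is attained. -/
lemma exists_minimizer {n m : ℕ} [NeZero n] (D : Matrix (Fin n) (Fin n) ℝ)
    (c : Fin n → ℝ) (a : Fin m → Fin n → ℝ) (b ξ : Fin m → ℝ)
    (hne : ∃ x w, conv1Feas ξ a b x w)
    (y : Fin m → ℝ) (hy : ∀ i, 0 ≤ y i) (hσ : 0 < ∑ i, y i * ξ i) :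
    ∃ x w, conv1Feas ξ a b x w ∧
      ∀ x' w', conv1Feas ξ a b x' w' → conv1Obj D c x w ≤ conv1Obj D c x' w' := by
  set S : Set ((Fin n → ℝ) × ℝ) := {p | conv1Feas ξ a b p.1 p.2} with hS
  have hclosed : IsClosed S := by
    have : S = (⋂ i, {p | ξ i * p.2 + 2 * ∑ j, a i j * p.1 j ≤ b i}) ∩
        {p | ∑ j, p.1 j ^ 2 ≤ p.2} := by
      ext p
      simp [hS, conv1Feas]
    rw [this]
    refine (isClosed_iInter fun i => isClosed_le (by fun_prop) continuous_const).inter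
      (isClosed_le (by fun_prop) continuous_snd)
  set σ := ∑ i, y i * ξ i with hσdef
  set β := ∑ i, y i * b i with hβ
  set α : Fin n → ℝ := fun j => ∑ i, y i * a i j with hα
  set W := (2 / σ) * (β + (2 / σ) * ∑ j, α j ^ 2) with hW
  have hbound : ∀ p ∈ S, p.2 ≤ W := by
    rintro ⟨x, w⟩ ⟨h1, h2⟩
    simp only at h1 h2 ⊢
    have hagg : σ * w + 2 * ∑ j, α j * x j ≤ β := by
      have e : σ * w + 2 * ∑ j, α j * x j
          = ∑ i, y i * (ξ i * w + 2 * ∑ j, a i j * x j) := by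
        have e2 : ∑ j, α j * x j = ∑ i, y i * ∑ j, a i j * x j := by
          simp only [hα, Finset.sum_mul, Finset.mul_sum]
          rw [Finset.sum_comm]
          exact Finset.sum_congr rfl fun i _ => Finset.sum_congr rfl fun j _ => by ring
        rw [e2, hσdef, Finset.sum_mul, Finset.mul_sum, ← Finset.sum_add_distrib]
        exact Finset.sum_congr rfl fun i _ => by ring
      rw [e]
      exact Finset.sum_le_sum fun i _ => mul_le_mul_of_nonneg_left (h1 i) (hy i)
    -- Young's inequality absorbs the linear term into half of `σ w`.
    have hyoung : -(σ / 2 * ∑ j, x j ^ 2 + (2 / σ) * ∑ j, α j ^ 2) ≤ 2 * ∑ j, α j * x j := by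
      simp only [Finset.mul_sum, ← Finset.sum_add_distrib, ← Finset.sum_neg_distrib]
      refine Finset.sum_le_sum fun j _ => ?_
      have : σ / 2 * (x j + (2 / σ) * α j) ^ 2
          = σ / 2 * x j ^ 2 + 2 / σ * α j ^ 2 + 2 * (α j * x j) := by
        field_simp
        ring
      have h0 : 0 ≤ σ / 2 * (x j + (2 / σ) * α j) ^ 2 := by positivity
      linarith
    have h3 : σ / 2 * ∑ j, x j ^ 2 ≤ σ / 2 * w := mul_le_mul_of_nonneg_left h2 (by positivity)
    have h4 : σ / 2 * w ≤ β + (2 / σ) * ∑ j, α j ^ 2 := by linarith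
    have h5 := mul_le_mul_of_nonneg_left h4 (show 0 ≤ 2 / σ by positivity)
    have h6 : 2 / σ * (σ / 2 * w) = w := by field_simp
    rw [h6] at h5
    exact h5
  have hcompact : IsCompact S := by
    refine IsCompact.of_isClosed_subset
      (isCompact_Icc (a := ((fun _ => -(W + 1), 0) : (Fin n → ℝ) × ℝ))
        (b := (fun _ => W + 1, W))) hclosed ?_
    intro p hp
    have hpW := hbound p hp
    have h2 : ∑ j, p.1 j ^ 2 ≤ p.2 := hp.2
    have hp0 : 0 ≤ p.2 := le_trans (Finset.sum_nonneg fun j _ => sq_nonneg _) h2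
    have hj : ∀ j, |p.1 j| ≤ W + 1 := by
      intro j
      have h3 : p.1 j ^ 2 ≤ ∑ j, p.1 j ^ 2 :=
        Finset.single_le_sum (f := fun j => p.1 j ^ 2) (fun j _ => sq_nonneg _) (Finset.mem_univ j)
      exact abs_le_of_sq_le_sq (by nlinarith) (by linarith)
    exact ⟨⟨fun j => (abs_le.mp (hj j)).1, hp0⟩, ⟨fun j => (abs_le.mp (hj j)).2, hpW⟩⟩
  obtain ⟨x₀, w₀, h₀⟩ := hne
  have hcont : Continuous fun p : (Fin n → ℝ) × ℝ => conv1Obj D c p.1 p.2 := by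
    unfold conv1Obj
    fun_prop
  obtain ⟨p, hp, hmin⟩ := hcompact.exists_isMinOn ⟨(x₀, w₀), h₀⟩ hcont.continuousOn
  exact ⟨p.1, p.2, hp, fun x' w' h => hmin (a := (x', w')) h⟩

/-! ### Comparing the three problems -/

lemma sum_diag_quad {n : ℕ} {B : Matrix (Fin n) (Fin n) ℝ} (hB : B.IsDiag) (x : Fin n → ℝ) :
    ∑ j, ∑ k, x j * B j k * x k = ∑ j, B j j * x j ^ 2 := by
  refine Finset.sum_congr rfl fun j _ => ?_
  rw [Finset.sum_eq_single j]
  · ring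
  · intro k _ hk
    rw [hB hk.symm]
    ring
  · simp

lemma traceIP_diag {n : ℕ} {B : Matrix (Fin n) (Fin n) ℝ} (hB : B.IsDiag)
    (X : Matrix (Fin n) (Fin n) ℝ) : traceIP B X = ∑ j, B j j * X j j := by
  refine Finset.sum_congr rfl fun j _ => ?_
  rw [Finset.sum_eq_single j]
  · intro k _ hk
    rw [hB hk.symm, zero_mul]
  · simp

lemma qFeas_iff {n m : ℕ} {A : Fin m → Matrix (Fin n) (Fin n) ℝ} (hA : ∀ i, (A i).IsDiag)
    {ξ : Fin m → ℝ} (hξ : ∀ i j, A i j j = ξ i) (a : Fin m → Fin n → ℝ) (b : Fin m → ℝ)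
    (x : Fin n → ℝ) : qFeas A a b x ↔ conv1Feas ξ a b x (∑ j, x j ^ 2) := by
  simp only [qFeas, conv1Feas, sum_diag_quad (hA _), hξ, ← Finset.mul_sum, le_refl, and_true]

lemma qObj_eq {n : ℕ} [NeZero n] {D : Matrix (Fin n) (Fin n) ℝ} (hD : D.IsDiag)
    (c x : Fin n → ℝ) : qObj D c x = conv1Obj D c x (∑ j, x j ^ 2) := by
  simp only [qObj, conv1Obj, sum_diag_quad hD, sub_mul, Finset.sum_sub_distrib, Finset.mul_sum]
  ring

/-- Every feasible point `x` of (P) gives the Shor-feasible pair `(x xᵀ, x)` of equal value. -/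
lemma shorVal_le_qVal {n m : ℕ} (D : Matrix (Fin n) (Fin n) ℝ)
    (A : Fin m → Matrix (Fin n) (Fin n) ℝ)
    (c : Fin n → ℝ) (a : Fin m → Fin n → ℝ) (b : Fin m → ℝ) :
    shorVal D A c a b ≤ qVal D A c a b := by
  have ht : ∀ (B : Matrix (Fin n) (Fin n) ℝ) (x : Fin n → ℝ),
      traceIP B (vecMulVec x x) = ∑ j, ∑ k, x j * B j k * x k := fun B x =>
    Finset.sum_congr rfl fun j _ => Finset.sum_congr rfl fun k _ => by
      rw [vecMulVec_apply]; ring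
  refine sInf_le_sInf ?_
  rintro v ⟨x, hx, rfl⟩
  refine ⟨vecMulVec x x, x, ⟨?_, fun i => ?_, ?_⟩, ?_⟩
  · ext j k
    simp [vecMulVec_apply, mul_comm]
  · rw [ht]
    exact hx i
  · rw [sub_self]
    exact Matrix.PosSemidef.zero
  · rw [shorObj, qObj, ht]

/-- A Shor-feasible pair `(X, x)` gives the point `(x, tr X)` of (C'), whose value is no larger
because `Dⱼⱼ ≥ d*` and `Xⱼⱼ ≥ xⱼ²`. -/
lemma conv1Val_le_shorVal {n m : ℕ} [NeZero n] {D : Matrix (Fin n) (Fin n) ℝ} (hD : D.IsDiag)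
    {A : Fin m → Matrix (Fin n) (Fin n) ℝ} (hA : ∀ i, (A i).IsDiag)
    (c : Fin n → ℝ) (a : Fin m → Fin n → ℝ) (b : Fin m → ℝ)
    {ξ : Fin m → ℝ} (hξ : ∀ i j, A i j j = ξ i) (hmin : ∀ j, D 0 0 ≤ D j j) :
    conv1Val D ξ c a b ≤ shorVal D A c a b := by
  refine le_sInf ?_
  rintro v ⟨X, x, ⟨-, hlin, hpsd⟩, rfl⟩
  have hdiag : ∀ j, x j ^ 2 ≤ X j j := by
    intro j
    have := hpsd.diag_nonneg (i := j)
    rw [Matrix.sub_apply, vecMulVec_apply] at this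
    nlinarith
  have hfeas : conv1Feas ξ a b x (∑ j, X j j) := by
    refine ⟨fun i => ?_, Finset.sum_le_sum fun j _ => hdiag j⟩
    have := hlin i
    rwa [traceIP_diag (hA i), Finset.sum_congr rfl fun j _ => by rw [hξ i j],
      ← Finset.mul_sum] at this
  have hle : conv1Obj D c x (∑ j, X j j) ≤ shorObj D c X x := by
    rw [conv1Obj, shorObj, traceIP_diag hD]
    have h : D 0 0 * ∑ j, X j j + ∑ j, (D j j - D 0 0) * x j ^ 2 ≤ ∑ j, D j j * X j j := by
      rw [Finset.mul_sum, ← Finset.sum_add_distrib]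
      refine Finset.sum_le_sum fun j _ => ?_
      have := mul_le_mul_of_nonneg_left (hdiag j) (sub_nonneg.mpr (hmin j))
      linarith
    linarith
  have hmem : conv1Val D ξ c a b ≤ ((conv1Obj D c x (∑ j, X j j) : ℝ) : EReal) :=
    sInf_le ⟨x, _, hfeas, rfl⟩
  exact hmem.trans (EReal.coe_le_coe_iff.mpr hle)

/-- Proposition 3 of the paper: under Assumption 1 and the
`|H| = 1` hypothesis (each `Aⁱ` has constant diagonal `ξ_i`, and the minimal
diagonal entry `d* = D 0 0` of `D` is attained uniquely at the first index),
if the convex set (20) is empty, then the second convex relaxation (C') is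
exact, `q* = c*`, and hence the Shor relaxation is exact, `v* = c*`. -/
theorem statement13 {n m : ℕ} [NeZero n] (hm : 0 < m)
    (D : Matrix (Fin n) (Fin n) ℝ) (hD : D.IsDiag)
    (A : Fin m → Matrix (Fin n) (Fin n) ℝ) (hA : ∀ i, (A i).IsDiag)
    (c : Fin n → ℝ) (a : Fin m → Fin n → ℝ) (b : Fin m → ℝ)
    (ξ : Fin m → ℝ) (hξ : ∀ i j, A i j j = ξ i)
    (hmin : ∀ j : Fin n, j ≠ 0 → D 0 0 < D j j)
    (hass : Assumption1 A a b)
    (hempty : ¬ ∃ (μ : Fin m → ℝ) (x : Fin n → ℝ) (w : ℝ),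
      (∀ i, 0 ≤ μ i) ∧
      D 0 0 + (∑ i, ξ i * μ i) = 0 ∧
      c 0 + (∑ i, a i 0 * μ i) = 0 ∧
      (∀ j : Fin n, j ≠ 0 → (D j j - D 0 0) * x j + c j + (∑ i, a i j * μ i) = 0) ∧
      (∀ i, ξ i * w + 2 * ∑ j, a i j * x j ≤ b i) ∧
      (∑ j, x j ^ 2) ≤ w) :
    conv1Val D ξ c a b = qVal D A c a b ∧
      shorVal D A c a b = qVal D A c a b := by
  have hmin' : ∀ j, D 0 0 ≤ D j j := fun j => by
    by_cases hj : j = 0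
    · rw [hj]
    · exact (hmin j hj).le
  have h1 : conv1Val D ξ c a b ≤ shorVal D A c a b := conv1Val_le_shorVal hD hA c a b hξ hmin'
  have h2 : shorVal D A c a b ≤ qVal D A c a b := shorVal_le_qVal D A c a b
  have h3 : qVal D A c a b ≤ conv1Val D ξ c a b := by
    obtain ⟨⟨x₀, hx₀⟩, ⟨y, hy, hpd⟩, -⟩ := hass
    have hσ : 0 < ∑ i, y i * ξ i := by
      have := hpd.diag_pos (i := 0)
      simpa [Matrix.sum_apply, hξ] using this
    obtain ⟨x, w, hf, hopt⟩ := exists_minimizer D c a b ξ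
      ⟨x₀, _, (qFeas_iff hA hξ a b x₀).mp hx₀⟩ y hy hσ
    rcases hf.2.lt_or_eq with hlt | heq
    · obtain ⟨μ, hμ, hD0, hst⟩ := exists_multipliers D c a b ξ x w hf hlt hopt
      refine absurd ⟨μ, x, w, hμ, hD0, ?_, fun j _ => hst j, hf⟩ hempty
      simpa using hst 0
    · subst heq
      refine le_sInf ?_
      rintro v ⟨x', w', hf', rfl⟩
      have hmem : qVal D A c a b ≤ ((qObj D c x : ℝ) : EReal) :=
        sInf_le ⟨x, (qFeas_iff hA hξ a b x).mpr hf, rfl⟩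
      refine hmem.trans ?_
      rw [EReal.coe_le_coe_iff, qObj_eq hD]
      exact hopt x' w' hf'
  exact ⟨le_antisymm (h1.trans h2) h3, le_antisymm h2 (h3.trans h1)⟩

end DiagQCQP2011
end

section
/- Under the |H| = 1 hypothesis, suppose (μ̄, x̄, w̄) ∈ ℝ^m × ℝ^n × ℝ satisfies: μ̄ ≥ 0; d* + Σ_{i∈M} ξ_i μ̄_i = 0; c_1 + Σ_{i∈M} a_{i1} μ̄_i = 0; (D_{jj} − d*) x̄_j + c_j + Σ_{i∈M} a_{ij} μ̄_i = 0 for all j ≠ 1; ξ_i w̄ + 2 Σ_{j∈N} a_{ij} x̄_j ≤ b_i for all i ∈ M; and Σ_{j∈N} x̄_j² ≤ w̄. Define z̄_1 = w̄ − Σ_{j≠1} x̄_j² and x_j(μ) = −(c_j + Σ_{i∈M} μ_i a_{ij})/(D_{jj} − d*) for j ≠ 1. Then x̄_j = x_j(μ̄) for all j ≠ 1, x̄_1² ≤ z̄_1, and for every i ∈ M: ξ_i z̄_1 + Σ_{j≠1} ξ_i x_j(μ̄)² + 2 a_{i1} x̄_1 + 2 Σ_{j≠1} a_{ij} x_j(μ̄)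 ≤ b_i; that is, (μ̄, x̄_1, z̄_1) belongs to the set whose emptiness is the primal-dual exactness condition of Section 3.4. -/
/-! For `j ≠ 0` the stationarity equation can be solved for `x j` because
`D j j - D 0 0 > 0`, which gives `x j = xmu D c a μ j`. Splitting the term `j = 0` off
each sum over all coordinates and using `w = z1 + ∑_{j ≠ 0} x j ^ 2` then turns the two
feasibility inequalities into the two claimed ones. -/

/- Common definitions for diagonal QCQPs, the Shor relaxation, and the
convex relaxations, following "Exactness conditions for the Shor relaxation
of diagonal QCQPs". Optimal values are infima in the extended reals. -/

namespace DiagQCQP2011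

open Matrix Finset

/-- under the `|H| = 1` hypothesis, any point `(μ̄, x̄, w̄)` of the
convex set (20) yields, with `z̄_1 = w̄ - Σ_{j≠1} x̄_j²`, a point
`(μ̄, x̄_1, z̄_1)` of the set (19) whose emptiness is the primal-dual exactness
condition of Section 3.4 of the paper. -/
theorem statement16 {n m : ℕ} [NeZero n] (hm : 0 < m)
    (D : Matrix (Fin n) (Fin n) ℝ) (hD : D.IsDiag)
    (A : Fin m → Matrix (Fin n) (Fin n) ℝ) (hA : ∀ i, (A i).IsDiag)
    (c : Fin n → ℝ) (a : Fin m → Fin n → ℝ) (b : Fin m → ℝ)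
    (ξ : Fin m → ℝ) (hξ : ∀ i j, A i j j = ξ i)
    (hmin : ∀ j : Fin n, j ≠ 0 → D 0 0 < D j j)
    (μ : Fin m → ℝ) (x : Fin n → ℝ) (w : ℝ)
    (h1 : ∀ i, 0 ≤ μ i)
    (h2 : D 0 0 + (∑ i, ξ i * μ i) = 0)
    (h3 : c 0 + (∑ i, a i 0 * μ i) = 0)
    (h4 : ∀ j : Fin n, j ≠ 0 → (D j j - D 0 0) * x j + c j + (∑ i, a i j * μ i) = 0)
    (h5 : ∀ i, ξ i * w + 2 * ∑ j, a i j * x j ≤ b i)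
    (h6 : (∑ j, x j ^ 2) ≤ w)
    (z1 : ℝ) (hz1 : z1 = w - ∑ j ∈ Finset.univ \ {(0 : Fin n)}, x j ^ 2) :
    (∀ j : Fin n, j ≠ 0 → x j = xmu D c a μ j) ∧
    x 0 ^ 2 ≤ z1 ∧
    (∀ i, ξ i * z1 + (∑ j ∈ Finset.univ \ {(0 : Fin n)}, ξ i * xmu D c a μ j ^ 2) +
      2 * a i 0 * x 0 +
      2 * ∑ j ∈ Finset.univ \ {(0 : Fin n)}, a i j * xmu D c a μ j ≤ b i) := by
  have split : ∀ f : Fin n → ℝ,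
      ∑ j, f j = (∑ j ∈ Finset.univ \ {(0 : Fin n)}, f j) + f 0 := by
    intro f
    rw [← Finset.sum_sdiff (Finset.subset_univ {(0 : Fin n)}), Finset.sum_singleton]
  have hx : ∀ j : Fin n, j ≠ 0 → x j = xmu D c a μ j := by
    intro j hj
    have hne : D j j - D 0 0 ≠ 0 := (sub_pos.mpr (hmin j hj)).ne'
    have hcomm : ∑ i, μ i * a i j = ∑ i, a i j * μ i :=
      Finset.sum_congr rfl fun i _ => mul_comm _ _
    rw [xmu, eq_div_iff hne, hcomm]
    linarith [h4 j hj]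
  refine ⟨hx, ?_, fun i => ?_⟩
  · rw [split] at h6
    linarith
  · have hsub : ∀ j ∈ Finset.univ \ {(0 : Fin n)}, xmu D c a μ j = x j := by
      intro j hj
      exact (hx j (by simpa using hj)).symm
    have hquad : ∑ j ∈ Finset.univ \ {(0 : Fin n)}, ξ i * xmu D c a μ j ^ 2 =
        ξ i * ∑ j ∈ Finset.univ \ {(0 : Fin n)}, x j ^ 2 := by
      rw [Finset.mul_sum]
      exact Finset.sum_congr rfl fun j hj => by rw [hsub j hj]
    have hlin : ∑ j ∈ Finset.univ \ {(0 : Fin n)}, a i j * xmu D c a μ j =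
        ∑ j ∈ Finset.univ \ {(0 : Fin n)}, a i j * x j :=
      Finset.sum_congr rfl fun j hj => by rw [hsub j hj]
    have h := h5 i
    rw [split] at h
    rw [hquad, hlin, hz1]
    linarith

end DiagQCQP2011
end
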